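/- For every positive integer k, the class of finite matroids with decomposition-width at most k is minor-closed: if N is a minor of a finite matroid M (obtained from M by deletions and contractions) and dw(M) ≤ k, then dw(N) ≤ k. -/

import Mathlib

open scoped Classical

/-- A set-system: a finite ground set `E` together with a family `Ind` of subsets of `E`,
called the independent sets. -/
structure SetSystem (α : Type) where
  E : Finset α
  Ind : Set (Finset α)
  ind_subset : ∀ X ∈ Ind, X ⊆ E

namespace SetSystem

variable {α : Type}

/-- The relation `X ∼_U X'`: for every `Z ⊆ E − U`, `X ∪ Z` is independent iff `X' ∪ Z` is. -/
def Eqv (S : SetSystem α) (U : Finset α) (X X' : Finset α) : Prop :=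
  ∀ Z : Finset α, Z ⊆ S.E \ U → ((X ∪ Z) ∈ S.Ind ↔ (X' ∪ Z) ∈ S.Ind)

/-- `∼_U` as a setoid on the subsets of `U`. -/
def eqvSetoid (S : SetSystem α) (U : Finset α) : Setoid {X : Finset α // X ⊆ U} where
  r X X' := S.Eqv U X.1 X'.1
  iseqv := ⟨fun _ _ _ => Iff.rfl, fun h Z hZ => (h Z hZ).symm,
    fun h h' Z hZ => (h Z hZ).trans (h' Z hZ)⟩

/-- The number of equivalence classes of `∼_U` on the subsets of `U`. -/
noncomputable def numClasses (S : SetSystem α) (U : Finset α) : ℕ :=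
  Nat.card (Quotient (S.eqvSetoid U))

end SetSystem

/-- A decomposition of a finite ground set `E`: a subcubic tree (every vertex has degree
one or three) together with a bijection from `E` to the set of leaves (degree-one vertices). -/
structure Decomp (α : Type) (E : Finset α) where
  V : Type
  [fintypeV : Fintype V]
  [decEqV : DecidableEq V]
  G : SimpleGraph V
  [decAdj : DecidableRel G.Adj]
  isTree : G.IsTree
  subcubic : ∀ v : V, G.degree v = 1 ∨ G.degree v = 3
  leaf : α → V
  leaf_degree : ∀ a ∈ E, G.degree (leaf a) = 1
  leaf_injOn : Set.InjOn leaf ↑E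
  leaf_surj : ∀ v : V, G.degree v = 1 → ∃ a ∈ E, leaf a = v

namespace Decomp

attribute [instance] fintypeV decEqV decAdj

variable {α : Type} {E : Finset α}

/-- The set `U ⊆ E` is displayed by an edge `uv` of the decomposition: it consists of those
elements of `E` whose leaf lies in the component of `T − uv` containing `u`. -/
def Displays (D : Decomp α E) (U : Finset α) : Prop :=
  U ⊆ E ∧ ∃ u v : D.V, D.G.Adj u v ∧
    ∀ a ∈ E, (a ∈ U ↔ (D.G.deleteEdges {s(u, v)}).Reachable (D.leaf a) u)

end Decomp

namespace SetSystem

variable {α : Type}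

/-- The decomposition-width of a set-system: the least `k` such that some decomposition has
all displayed sets `U` with at most `k` equivalence classes under `∼_U`. -/
noncomputable def dw (S : SetSystem α) : ℕ :=
  sInf {k : ℕ | ∃ D : Decomp α S.E, ∀ U : Finset α, D.Displays U → S.numClasses U ≤ k}

end SetSystem

namespace Matroid

variable {α : Type}

/-- The set-system of independent sets of a matroid on a finite type. -/
noncomputable def toSetSystem [Fintype α] (M : Matroid α) : SetSystem α where
  E := M.E.toFinite.toFinset
  Ind := {X : Finset α | M.Indep ↑X}
  ind_subset := fun _X hX _a ha =>
    (Set.Finite.mem_toFinset _).2 (hX.subset_ground (Finset.mem_coe.2 ha))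

/-- The decomposition-width of a matroid. -/
noncomputable def dw [Fintype α] (M : Matroid α) : ℕ := M.toSetSystem.dw

/-- The rank of a set in a matroid: the largest size of an independent subset. -/
noncomputable def rank [Fintype α] (M : Matroid α) (U : Set α) : ℕ :=
  sSup {n : ℕ | ∃ X : Finset α, ↑X ⊆ U ∧ M.Indep ↑X ∧ X.card = n}

/-- The connectivity function `λ_M(U) = r(U) + r(E − U) − r(M)`. -/
noncomputable def lambda [Fintype α] (M : Matroid α) (U : Set α) : ℕ :=
  M.rank U + M.rank (M.E \ U) - M.rank M.E

/-- The branch-width of a matroid: the least `k` such that some decomposition of the ground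
set has `λ_M(U) + 1 ≤ k` for every displayed set `U`. -/
noncomputable def bw [Fintype α] (M : Matroid α) : ℕ :=
  sInf {k : ℕ | ∃ D : Decomp α M.toSetSystem.E,
    ∀ U : Finset α, D.Displays U → M.lambda ↑U + 1 ≤ k}

/-- Deletion of a set of elements from a matroid. -/
def del (M : Matroid α) (D : Set α) : Matroid α := M ↾ (M.E \ D)

/-- Contraction of a set of elements in a matroid, defined via duality. -/
def con (M : Matroid α) (C : Set α) : Matroid α := (M✶ ↾ (M.E \ C))✶

/-- `N` is a minor of `M`: `N` is obtained from `M` by contractions and deletions. -/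
def IsMinorOf (N M : Matroid α) : Prop :=
  ∃ C D : Set α, C ⊆ M.E ∧ D ⊆ M.E ∧ Disjoint C D ∧ N = (M.con C).del D

/-- A pigeonhole class of matroids: every subclass of bounded branch-width has bounded
decomposition-width. -/
def PigeonholeClass [Fintype α] (𝓜 : Set (Matroid α)) : Prop :=
  ∀ lam : ℕ, 0 < lam → ∃ ρ : ℕ, ∀ M ∈ 𝓜, M.bw ≤ lam → M.dw ≤ ρ

end Matroid

/-- A `Σ`-tree: a finite full binary tree with `Γ`-labelled vertices. -/
inductive STree (Γ : Type) : Type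
  | leaf : Γ → STree Γ
  | node : Γ → STree Γ → STree Γ → STree Γ

/-- A tree automaton with alphabet `Γ`, state set `Q`, accepting states `accept`, and
(partial) transition rules `δ0` and `δ2`. -/
structure TreeAut (Γ : Type) (Q : Type) where
  accept : Finset Q
  δ0 : Γ → Option (Finset Q)
  δ2 : Γ → Q → Q → Option (Finset Q)

namespace STree

variable {Γ : Type}

/-- The number of leaves of a tree. -/
def leafCount : STree Γ → ℕ
  | .leaf _ => 1
  | .node _ l r => l.leafCount + r.leafCount

/-- `Subtree s t` means `s` is the subtree of `t` rooted at one of the vertices of `t`. -/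
inductive Subtree : STree Γ → STree Γ → Prop
  | refl (t : STree Γ) : Subtree t t
  | left {s l r : STree Γ} {a : Γ} : Subtree s l → Subtree s (.node a l r)
  | right {s l r : STree Γ} {a : Γ} : Subtree s r → Subtree s (.node a l r)

/-- Relabel the vertices of a tree: each leaf label is transformed by `f` applied to its
left-to-right index (offset by the second argument), internal labels by `g`. -/
def relabel {Γ' : Type} (f : ℕ → Γ → Γ') (g : Γ → Γ') : STree Γ → ℕ → STree Γ'
  | .leaf a, k => .leaf (f k a)
  | .node a l r, k => .node (g a) (l.relabel f g k) (r.relabel f g (k + l.leafCount))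

end STree

namespace TreeAut

variable {Γ Q : Type}

/-- The run of a tree automaton on a `Σ`-tree, computed bottom-up: a leaf receives
`δ0` of its label, an internal vertex the union of `δ2` over pairs of states at its
children (the empty set if any needed transition is undefined). -/
noncomputable def run (A : TreeAut Γ Q) : STree Γ → Finset Q
  | .leaf a => (A.δ0 a).getD ∅
  | .node a l r =>
      if ∀ qL ∈ A.run l, ∀ qR ∈ A.run r, (A.δ2 a qL qR).isSome then
        (A.run l).biUnion fun qL => (A.run r).biUnion fun qR => (A.δ2 a qL qR).getD ∅
      else ∅

/-- The automaton accepts a tree if the set of states assigned to the root contains an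
accepting state. -/
def Accepts (A : TreeAut Γ Q) (t : STree Γ) : Prop :=
  ∃ q ∈ A.run t, q ∈ A.accept

/-- A deterministic automaton: every image of `δ0` and `δ2` is a singleton. -/
def Deterministic (A : TreeAut Γ Q) : Prop :=
  (∀ a s, A.δ0 a = some s → s.card = 1) ∧
    (∀ a q₁ q₂ s, A.δ2 a q₁ q₂ = some s → s.card = 1)

end TreeAut

/-- The alphabet `Σ ∪ Σ × {0,1}^I`. -/
abbrev EncAlph (Γ : Type) (I : Finset ℕ) : Type := Γ ⊕ Γ × ({j // j ∈ I} → Bool)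

/-- `enc(T, σ, φ, {Y_j}_{j ∈ I})`: relabel each leaf `v` of the tree with `(σ(v), s)`, where
`s(j) = 1` iff `φ⁻¹(v) ∈ Y_j`; internal vertices keep their labels. -/
noncomputable def enc {α Γ : Type} (E : Finset α) (t : STree Γ)
    (φ : {a // a ∈ E} ≃ Fin t.leafCount) (I : Finset ℕ)
    (Y : {j // j ∈ I} → Finset α) : STree (EncAlph Γ I) :=
  t.relabel
    (fun k a => Sum.inr (a, fun j =>
      if h : k < t.leafCount then
        decide ((φ.symm ⟨k, h⟩ : {a // a ∈ E}).1 ∈ Y j) else false))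
    Sum.inl 0

/-- An `I`-ary automaton: `δ0` is defined only on leaf labels from `Σ × {0,1}^I`. -/
def TreeAut.IsIary {Γ Q : Type} (I : Finset ℕ) (A : TreeAut (EncAlph Γ I) Q) : Prop :=
  ∀ a : Γ, A.δ0 (Sum.inl a) = none

/-- The set-system `M(A, T, σ, φ)` determined by an `{i}`-ary automaton `A` and a parse
tree: a subset `Y ⊆ E` is independent iff `A` accepts `enc(T, σ, φ, {Y})`. -/
noncomputable def systemOf {α Γ Q : Type} (i : ℕ) (A : TreeAut (EncAlph Γ {i}) Q)
    (E : Finset α) (t : STree Γ) (φ : {a // a ∈ E} ≃ Fin t.leafCount) : SetSystem α where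
  E := E
  Ind := {Y : Finset α | Y ⊆ E ∧ A.Accepts (enc E t φ {i} fun _ => Y)}
  ind_subset := fun _ hY => hY.1

/-- A class of set-systems is automatic: there is a single `{i}`-ary tree automaton which
recognises independence in every member, via a suitable parse tree for each member. -/
def Automatic {α : Type} (𝓜 : Set (SetSystem α)) : Prop :=
  ∃ (Γ : Type) (_ : Fintype Γ) (Q : Type) (_ : Fintype Q) (i : ℕ)
    (A : TreeAut (EncAlph Γ {i}) Q), A.IsIary {i} ∧
      ∀ S ∈ 𝓜, ∃ (t : STree Γ) (φ : {a // a ∈ S.E} ≃ Fin t.leafCount),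
        S = systemOf i A S.E t φ

/-- Formulas of counting monadic second-order logic `CMS₀`, with set variables `X_n`:
atomic formulas `Ind(X_i)`, `X_i ⊆ X_j` and `|X_i|_{p,q}`, closed under `¬`, `∧`, `∃`. -/
inductive CMS0 : Type
  | ind : ℕ → CMS0
  | subset : ℕ → ℕ → CMS0
  | card : ℕ → ℕ → ℕ → CMS0
  | not : CMS0 → CMS0
  | and : CMS0 → CMS0 → CMS0
  | ex : ℕ → CMS0 → CMS0

namespace CMS0

/-- The free variables of a `CMS₀` formula. -/
def free : CMS0 → Finset ℕ
  | .ind i => {i}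
  | .subset i j => {i, j}
  | .card i _ _ => {i}
  | .not φ => φ.free
  | .and φ ψ => φ.free ∪ ψ.free
  | .ex i φ => φ.free.erase i

/-- Satisfaction of a `CMS₀` formula by a set-system under an interpretation `θ` assigning
subsets of the ground set to variables. -/
def Sat {α : Type} (S : SetSystem α) (θ : ℕ → Finset α) : CMS0 → Prop
  | .ind i => θ i ∈ S.Ind
  | .subset i j => θ i ⊆ θ j
  | .card i p q => (θ i).card % q = p
  | .not φ => ¬ Sat S θ φ
  | .and φ ψ => Sat S θ φ ∧ Sat S θ ψ
  | .ex i φ => ∃ Y : Finset α, Y ⊆ S.E ∧ Sat S (Function.update θ i Y) φ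

end CMS0
theorem reach_map {V W : Type} {H : SimpleGraph V} {H' : SimpleGraph W} (f : V → W)
    (h : ∀ u v, H.Adj u v → H'.Reachable (f u) (f v)) {u v : V} (huv : H.Reachable u v) :
    H'.Reachable (f u) (f v) := by
  obtain ⟨p⟩ := huv
  induction p with
  | nil => exact SimpleGraph.Reachable.refl _
  | cons hadj _ ih => exact (h _ _ hadj).trans ih

theorem reach_inv {V : Type} {H : SimpleGraph V} (P : V → Prop)
    (h : ∀ u v, H.Adj u v → P u → P v) {u v : V} (huv : H.Reachable u v) (hu : P u) : P v := by
  obtain ⟨p⟩ := huv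
  induction p with
  | nil => exact hu
  | cons hadj _ ih => exact ih (h _ _ hadj hu)

/-- suppress a leaf `l` and its neighbour `w`, joining the other neighbours `x`, `y` of `w`. -/
def suppG {V : Type} (G : SimpleGraph V) (l w x y : V) (hxy : x ≠ y) :
    SimpleGraph {v : V // v ≠ l ∧ v ≠ w} where
  Adj u v := G.Adj u v ∨ (u.1 = x ∧ v.1 = y) ∨ (u.1 = y ∧ v.1 = x)
  symm := ⟨by
    intro u v h
    rcases h with h | h | h
    · exact Or.inl h.symm
    · exact Or.inr (Or.inr ⟨h.2, h.1⟩)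
    · exact Or.inr (Or.inl ⟨h.2, h.1⟩)⟩
  loopless := ⟨by
    intro u h
    rcases h with h | h | h
    · exact G.loopless.1 _ h
    · exact hxy (h.1.symm.trans h.2)
    · exact hxy (h.2.symm.trans h.1)⟩


theorem supp_core {V : Type} {G : SimpleGraph V} {l w x y : V} (hxy : x ≠ y)
    (hl : ∀ v, G.Adj l v ↔ v = w) (hw : ∀ v, G.Adj w v ↔ v = l ∨ v = x ∨ v = y)
    (hlx : l ≠ x) (hly : l ≠ y)
    (e : Sym2 V) (e' : Sym2 {v : V // v ≠ l ∧ v ≠ w})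
    (h1 : ∀ p q, ((suppG G l w x y hxy).deleteEdges {e'}).Adj p q →
      (G.deleteEdges {e}).Reachable p.1 q.1)
    (h2 : ∀ p q : {v : V // v ≠ l ∧ v ≠ w}, (G.deleteEdges {e}).Adj p.1 q.1 →
      ((suppG G l w x y hxy).deleteEdges {e'}).Reachable p q)
    (h3 : ∀ p q : {v : V // v ≠ l ∧ v ≠ w}, p.1 = x → q.1 = y → (G.deleteEdges {e}).Adj p.1 w → 
      ((suppG G l w x y hxy).deleteEdges {e'}).Reachable p q)
    (p q : {v : V // v ≠ l ∧ v ≠ w}) :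
    ((suppG G l w x y hxy).deleteEdges {e'}).Reachable p q ↔
      (G.deleteEdges {e}).Reachable p.1 q.1 := by
  constructor
  · exact reach_map (fun p : {v : V // v ≠ l ∧ v ≠ w} => p.1) h1
  · intro h
    have hyw : y ≠ w := fun h => G.loopless.1 w ((hw w).2 (by simp [h]))
    have hxw : x ≠ w := fun h => G.loopless.1 w ((hw w).2 (by simp [h]))
    let f : V → {v : V // v ≠ l ∧ v ≠ w} :=
      fun v => if h : v ≠ l ∧ v ≠ w then ⟨v, h⟩ else ⟨y, hly.symm, hyw⟩
    have hf : ∀ v : {v : V // v ≠ l ∧ v ≠ w}, f v.1 = v := by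
      intro v; simp [f, v.2]
    have hfl : f l = ⟨y, hly.symm, hyw⟩ := by simp [f]
    have hfw : f w = ⟨y, hly.symm, hyw⟩ := by simp [f]
    have key : ∀ a b, (G.deleteEdges {e}).Adj a b →
        ((suppG G l w x y hxy).deleteEdges {e'}).Reachable (f a) (f b) := by
      have hlb : ∀ b, G.Adj l b → f l = f b := by
        intro b hb
        rw [(hl b).1 hb, hfl, hfw]
      have hwb : ∀ b, (G.deleteEdges {e}).Adj b w → 
        ((suppG G l w x y hxy).deleteEdges {e'}).Reachable (f b) (f w) := by
        intro b hb
        rcases (hw b).1 (SimpleGraph.deleteEdges_adj.1 hb).1.symm with h | h | h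
        · rw [h, hfl, hfw]
        · subst h
          have := h3 ⟨b, hlx.symm, hxw⟩ ⟨y, hly.symm, hyw⟩ rfl rfl hb
          rwa [hfw, ← hf ⟨b, hlx.symm, hxw⟩] at *
        · rw [h, hfw, ← hf ⟨y, hly.symm, hyw⟩]
      intro a b hab
      by_cases ha : a = l
      · subst ha; rw [hlb b (SimpleGraph.deleteEdges_adj.1 hab).1]
      by_cases hb : b = l
      · subst hb; rw [hlb a (SimpleGraph.deleteEdges_adj.1 hab).1.symm]
      by_cases haw : a = w
      · subst haw; exact (hwb b hab.symm).symm
      by_cases hbw : b = w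
      · subst hbw; exact hwb a hab
      have := h2 ⟨a, ha, haw⟩ ⟨b, hb, hbw⟩ hab
      rwa [← hf ⟨a, ha, haw⟩, ← hf ⟨b, hb, hbw⟩] at this
    have := reach_map f key h
    rwa [hf, hf] at this

theorem supp_lift {V : Type} {G : SimpleGraph V} {l w x y : V} (hxy : x ≠ y)
    (hl : ∀ v, G.Adj l v ↔ v = w) (hw : ∀ v, G.Adj w v ↔ v = l ∨ v = x ∨ v = y)
    (hlx : l ≠ x) (hly : l ≠ y) (hnxy : ¬ G.Adj x y)
    (u v : {v : V // v ≠ l ∧ v ≠ w}) (huv : (suppG G l w x y hxy).Adj u v) :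
    ∃ u' v' : V, G.Adj u' v' ∧
      (∀ p, ((suppG G l w x y hxy).deleteEdges {s(u, v)}).Reachable p u ↔
        (G.deleteEdges {s(u', v')}).Reachable p.1 u') ∧
      (∀ p, ((suppG G l w x y hxy).deleteEdges {s(u, v)}).Reachable p v ↔
        (G.deleteEdges {s(u', v')}).Reachable p.1 v') := by
  have hyw : y ≠ w := fun h => G.loopless.1 w ((hw w).2 (by simp [h]))
  have hxw : x ≠ w := fun h => G.loopless.1 w ((hw w).2 (by simp [h]))
  have awx : G.Adj w x := (hw x).2 (by simp)
  have awy : G.Adj w y := (hw y).2 (by simp)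
  have nxy : ∀ p q : {v : V // v ≠ l ∧ v ≠ w}, G.Adj p.1 q.1 → p.1 ≠ w ∧ q.1 ≠ w :=
    fun p q _ => ⟨p.2.2, q.2.2⟩
  have ryw : (G.deleteEdges {s(x, w)}).Reachable y w := by
    apply SimpleGraph.Adj.reachable
    rw [SimpleGraph.deleteEdges_adj]
    refine ⟨awy.symm, ?_⟩
    simp [hxy.symm, hyw]
  -- the new edge
  have hnew : ∀ a b : {v : V // v ≠ l ∧ v ≠ w}, a.1 = x → b.1 = y → ¬ G.Adj x y → 
      ∀ p q, ((suppG G l w x y hxy).deleteEdges {s(a, b)}).Reachable p q ↔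
      (G.deleteEdges {s(x, w)}).Reachable p.1 q.1 := by
    intro a b ha hb hnadj p q
    apply supp_core hxy hl hw hlx hly
    · intro p q hpq
      rw [SimpleGraph.deleteEdges_adj] at hpq
      obtain ⟨h, hne⟩ := hpq
      have hne' : ¬ (p.1 = x ∧ q.1 = y) ∧ ¬ (p.1 = y ∧ q.1 = x) := by
        simp only [Set.mem_singleton_iff, Sym2.eq_iff, Subtype.ext_iff, ha, hb] at hne
        tauto
      have h' : G.Adj p.1 q.1 := by
        rcases h with h | h | h
        · exact h
        · exact absurd h hne'.1
        · exact absurd h hne'.2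
      apply SimpleGraph.Adj.reachable
      rw [SimpleGraph.deleteEdges_adj]
      refine ⟨h', ?_⟩
      simp [p.2.2, q.2.2]
    · intro p q hpq
      rw [SimpleGraph.deleteEdges_adj] at hpq
      apply SimpleGraph.Adj.reachable
      rw [SimpleGraph.deleteEdges_adj]
      refine ⟨Or.inl hpq.1, ?_⟩
      simp only [Set.mem_singleton_iff, Sym2.eq_iff, Subtype.ext_iff, ha, hb]
      rintro (⟨h, h'⟩ | ⟨h, h'⟩)
      · exact hnadj (h ▸ h' ▸ hpq.1)
      · exact hnadj (h ▸ h' ▸ hpq.1.symm)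
    · intro p q hp hq h
      rw [SimpleGraph.deleteEdges_adj] at h
      simp [hp] at h
  by_cases hG : G.Adj u.1 v.1
  · have hold : ∀ p q, ((suppG G l w x y hxy).deleteEdges {s(u, v)}).Reachable p q ↔
      (G.deleteEdges {s(u.1, v.1)}).Reachable p.1 q.1 := by
      intro p q
      apply supp_core hxy hl hw hlx hly
      · intro p q hpq
        rw [SimpleGraph.deleteEdges_adj] at hpq
        obtain ⟨h, hne⟩ := hpq
        have rx : (G.deleteEdges {s(u.1, v.1)}).Adj x w := by
          rw [SimpleGraph.deleteEdges_adj]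
          refine ⟨awx.symm, ?_⟩
          simp [u.2.2.symm, v.2.2.symm]
        have ry : (G.deleteEdges {s(u.1, v.1)}).Adj y w := by
          rw [SimpleGraph.deleteEdges_adj]
          refine ⟨awy.symm, ?_⟩
          simp [u.2.2.symm, v.2.2.symm]
        rcases h with h | h | h
        · apply SimpleGraph.Adj.reachable
          rw [SimpleGraph.deleteEdges_adj]
          refine ⟨h, ?_⟩
          simpa [Sym2.eq_iff, Subtype.ext_iff] using hne
        · rw [h.1, h.2]; exact rx.reachable.trans ry.reachable.symm
        · rw [h.1, h.2]; exact ry.reachable.trans rx.reachable.symm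
      · intro p q hpq
        rw [SimpleGraph.deleteEdges_adj] at hpq
        apply SimpleGraph.Adj.reachable
        rw [SimpleGraph.deleteEdges_adj]
        refine ⟨Or.inl hpq.1, ?_⟩
        simpa [Sym2.eq_iff, Subtype.ext_iff] using hpq.2
      · intro p q hp hq h
        by_cases hs : s(p, q) = s(u, v)
        · exfalso
          rw [Sym2.eq_iff] at hs
          rcases hs with ⟨h1, h2⟩ | ⟨h1, h2⟩
          · rw [← h1, ← h2, hp, hq] at hG; exact hnxy hG
          · rw [← h1, ← h2, hp, hq] at hG; exact hnxy hG.symm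
        · apply SimpleGraph.Adj.reachable
          rw [SimpleGraph.deleteEdges_adj]
          exact ⟨Or.inr (Or.inl ⟨hp, hq⟩), hs⟩
    exact ⟨u.1, v.1, hG, fun p => hold p u, fun p => hold p v⟩
  · rcases huv with h | h | h
    · exact absurd h hG
    · rw [h.1, h.2] at hG
      have := hnew u v h.1 h.2 hG
      refine ⟨x, w, awx.symm, fun p => ?_, fun p => ?_⟩
      · rw [this, h.1]
      · rw [this, h.2]
        exact ⟨fun h => h.trans ryw, fun h => h.trans ryw.symm⟩
    · rw [h.1, h.2] at hG
      have := hnew v u h.2 h.1 (fun h => hG h.symm)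
      rw [Sym2.eq_swap]
      refine ⟨w, x, awx, fun p => ?_, fun p => ?_⟩
      · rw [this, h.1, Sym2.eq_swap (a := w)]
        exact ⟨fun h => h.trans ryw, fun h => h.trans ryw.symm⟩
      · rw [this, h.2, Sym2.eq_swap (a := w)]


theorem supp_isTree {V : Type} {G : SimpleGraph V} {l w x y : V} (hxy : x ≠ y)
    (hl : ∀ v, G.Adj l v ↔ v = w) (hw : ∀ v, G.Adj w v ↔ v = l ∨ v = x ∨ v = y)
    (hlx : l ≠ x) (hly : l ≠ y) (hnxy : ¬ G.Adj x y) (hG : G.IsTree) :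
    (suppG G l w x y hxy).IsTree := by
  have hyw : y ≠ w := fun h => G.loopless.1 w ((hw w).2 (by simp [h]))
  have hxw : x ≠ w := fun h => G.loopless.1 w ((hw w).2 (by simp [h]))
  have hlw : l ≠ w := ((hl w).2 rfl).ne
  refine ⟨?_, ?_⟩
  · rw [SimpleGraph.connected_iff]
    refine ⟨?_, ⟨⟨x, hlx.symm, hxw⟩⟩⟩
    intro p q
    have h := supp_core hxy hl hw hlx hly s(l, l) s(p, p) ?_ ?_ ?_ p q
    · refine (h.2 ?_).mono (SimpleGraph.deleteEdges_le _)
      refine (hG.connected p.1 q.1).mono ?_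
      intro a b hab
      rw [SimpleGraph.deleteEdges_adj]
      refine ⟨hab, ?_⟩
      intro h
      simp only [Set.mem_singleton_iff, Sym2.eq_iff] at h
      have := hab.ne
      grind
    · intro p' q' h
      rw [SimpleGraph.deleteEdges_adj] at h
      have hx : (G.deleteEdges {s(l, l)}).Adj x w := by
        rw [SimpleGraph.deleteEdges_adj]
        exact ⟨((hw x).2 (by simp)).symm, by simp [hlx.symm]⟩
      have hy : (G.deleteEdges {s(l, l)}).Adj y w := by
        rw [SimpleGraph.deleteEdges_adj]
        exact ⟨((hw y).2 (by simp)).symm, by simp [hly.symm]⟩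
      rcases h.1 with h | h | h
      · apply SimpleGraph.Adj.reachable
        rw [SimpleGraph.deleteEdges_adj]
        exact ⟨h, by simp [p'.2.1]⟩
      · rw [h.1, h.2]; exact hx.reachable.trans hy.reachable.symm
      · rw [h.1, h.2]; exact hy.reachable.trans hx.reachable.symm
    · intro p' q' h
      rw [SimpleGraph.deleteEdges_adj] at h
      apply SimpleGraph.Adj.reachable
      rw [SimpleGraph.deleteEdges_adj]
      refine ⟨Or.inl h.1, ?_⟩
      intro h'
      simp only [Set.mem_singleton_iff, Sym2.eq_iff] at h'
      have := h.1.ne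
      grind
    · intro p' q' hp hq h
      apply SimpleGraph.Adj.reachable
      rw [SimpleGraph.deleteEdges_adj]
      refine ⟨Or.inr (Or.inl ⟨hp, hq⟩), ?_⟩
      intro h'
      simp only [Set.mem_singleton_iff, Sym2.eq_iff] at h'
      grind
  · rw [SimpleGraph.isAcyclic_iff_forall_adj_isBridge]
    intro u v huv
    rw [SimpleGraph.isBridge_iff]
    intro hr
    obtain ⟨u', v', hadj, h1, h2⟩ := supp_lift hxy hl hw hlx hly hnxy u v huv
    have hb := (SimpleGraph.isAcyclic_iff_forall_adj_isBridge.1 hG.isAcyclic) hadj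
    rw [SimpleGraph.isBridge_iff] at hb
    apply hb
    have a1 := (h1 v).1 hr.symm
    have a2 := (h2 v).1 (SimpleGraph.Reachable.refl _)
    exact a1.symm.trans a2

theorem supp_degree {V : Type} [Fintype V] {G : SimpleGraph V} {l w x y : V} (hxy : x ≠ y)
    (hl : ∀ v, G.Adj l v ↔ v = w) (hw : ∀ v, G.Adj w v ↔ v = l ∨ v = x ∨ v = y)
    (hlx : l ≠ x) (hly : l ≠ y) (hnxy : ¬ G.Adj x y) (v : {v : V // v ≠ l ∧ v ≠ w}) :
    (suppG G l w x y hxy).degree v = G.degree v.1 := by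
  have hyw : y ≠ w := fun h => G.loopless.1 w ((hw w).2 (by simp [h]))
  have hxw : x ≠ w := fun h => G.loopless.1 w ((hw w).2 (by simp [h]))
  rw [← SimpleGraph.card_neighborFinset_eq_degree, ← SimpleGraph.card_neighborFinset_eq_degree]
  -- the bijection sends `z` to `w` if it is the new neighbour
  refine Finset.card_bij (fun z _ => if G.Adj v.1 z.1 then z.1 else w) ?_ ?_ ?_
  · intro z hz
    rw [SimpleGraph.mem_neighborFinset] at hz ⊢
    split_ifs with h
    · exact h
    · rcases hz with h' | h' | h'
      · exact absurd h' h
      · exact ((hw _).2 (by simp [h'.1])).symm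
      · exact ((hw _).2 (by simp [h'.1])).symm
  · intro z hz z' hz' h
    rw [SimpleGraph.mem_neighborFinset] at hz hz'
    have := z.2.2
    have := z'.2.2
    change _ ∨ _ at hz
    change _ ∨ _ at hz'
    apply Subtype.ext
    grind
  · intro b hb
    rw [SimpleGraph.mem_neighborFinset] at hb
    by_cases hbl : b = l
    · subst hbl
      exact absurd ((hl _).1 hb.symm) v.2.2
    by_cases hbw : b = w
    · subst hbw
      rcases (hw _).1 hb.symm with h | h | h
      · exact absurd h v.2.1
      · refine ⟨⟨y, hly.symm, hyw⟩, ?_, ?_⟩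
        · rw [SimpleGraph.mem_neighborFinset]; exact Or.inr (Or.inl ⟨h, rfl⟩)
        · simp [h, hnxy]
      · refine ⟨⟨x, hlx.symm, hxw⟩, ?_, ?_⟩
        · rw [SimpleGraph.mem_neighborFinset]; exact Or.inr (Or.inr ⟨h, rfl⟩)
        · have : ¬ G.Adj y x := fun h => hnxy h.symm
          simp [h, this]
    · refine ⟨⟨b, hbl, hbw⟩, ?_, ?_⟩
      · rw [SimpleGraph.mem_neighborFinset]; exact Or.inl hb
      · simp [hb]

theorem decomp_card {α : Type} {E : Finset α} (D : Decomp α E) : 2 ≤ E.card := by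
  obtain ⟨v⟩ := D.isTree.connected.nonempty
  have hpos : 0 < D.G.degree v := by rcases D.subcubic v with h | h <;> omega
  obtain ⟨u, hu⟩ := (D.G.degree_pos_iff_exists_adj v).1 hpos
  have : Nontrivial D.V := ⟨v, u, hu.ne⟩
  obtain ⟨a, b, hab, ha, hb⟩ := D.isTree.exists_ne_and_degree_eq_one
  obtain ⟨a', ha', rfl⟩ := D.leaf_surj a (by convert ha)
  obtain ⟨b', hb', rfl⟩ := D.leaf_surj b (by convert hb)
  exact Finset.one_lt_card.2 ⟨a', ha', b', hb', fun h => hab (by rw [h])⟩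

theorem decomp_remove {α : Type} {E : Finset α} (D : Decomp α E) (a : α) (ha : a ∈ E)
    (hc : 2 ≤ (E.erase a).card) :
    ∃ D' : Decomp α (E.erase a), ∀ U', D'.Displays U' →
      ∃ U, D.Displays U ∧ U' = U ∩ E.erase a := by
  obtain ⟨w, hlw, hwu⟩ := SimpleGraph.degree_eq_one_iff_existsUnique_adj.1 (D.leaf_degree a ha)
  have hl : ∀ v, D.G.Adj (D.leaf a) v ↔ v = w := fun v => ⟨hwu v, fun h => h ▸ hlw⟩
  have hw3 : D.G.degree w = 3 := by
    refine (D.subcubic w).resolve_left fun h1 => ?_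
    obtain ⟨l', hl', hlu⟩ := SimpleGraph.degree_eq_one_iff_existsUnique_adj.1 h1
    have hll : D.leaf a = l' := hlu _ hlw.symm
    have hall : ∀ v, v = D.leaf a ∨ v = w := by
      intro v
      refine reach_inv (fun v => v = D.leaf a ∨ v = w) ?_ (D.isTree.connected w v) (Or.inr rfl)
      rintro u v huv (rfl | rfl)
      · exact Or.inr (hwu v huv)
      · exact Or.inl ((hlu v huv).trans hll.symm)
    obtain ⟨b, hb, c, hc, hbc⟩ := Finset.one_lt_card.1 hc
    rw [Finset.mem_erase] at hb hc
    have hb' : D.leaf b = w := (hall _).resolve_left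
      fun h => hb.1 (D.leaf_injOn hb.2 ha h)
    have hc' : D.leaf c = w := (hall _).resolve_left
      fun h => hc.1 (D.leaf_injOn hc.2 ha h)
    exact hbc (D.leaf_injOn hb.2 hc.2 (hb'.trans hc'.symm))
  have hmem : D.leaf a ∈ D.G.neighborFinset w := by
    rw [SimpleGraph.mem_neighborFinset]; exact hlw.symm
  have h2 : ((D.G.neighborFinset w).erase (D.leaf a)).card = 2 := by
    rw [Finset.card_erase_of_mem hmem, SimpleGraph.card_neighborFinset_eq_degree, hw3]
  obtain ⟨x, y, hxy, hset⟩ := Finset.card_eq_two.1 h2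
  have hx : x ∈ (D.G.neighborFinset w).erase (D.leaf a) := by rw [hset]; simp
  have hy : y ∈ (D.G.neighborFinset w).erase (D.leaf a) := by rw [hset]; simp
  rw [Finset.mem_erase, SimpleGraph.mem_neighborFinset] at hx hy
  have hw : ∀ v, D.G.Adj w v ↔ v = D.leaf a ∨ v = x ∨ v = y := by
    intro v
    constructor
    · intro h
      by_cases hv : v = D.leaf a
      · exact Or.inl hv
      · have : v ∈ (D.G.neighborFinset w).erase (D.leaf a) := by
          rw [Finset.mem_erase, SimpleGraph.mem_neighborFinset]; exact ⟨hv, h⟩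
        rw [hset] at this
        simpa [hv] using this
    · rintro (h | h | h)
      · rw [h]; exact hlw.symm
      · rw [h]; exact hx.2
      · rw [h]; exact hy.2
  have hnxy : ¬ D.G.Adj x y := by
    intro h
    have hb := (SimpleGraph.isAcyclic_iff_forall_adj_isBridge.1 D.isTree.isAcyclic) h
    rw [SimpleGraph.isBridge_iff] at hb
    apply hb
    have a1 : (D.G.deleteEdges {s(x, y)}).Adj x w := by
      rw [SimpleGraph.deleteEdges_adj]
      exact ⟨hx.2.symm, by simp [hx.2.ne, hy.2.ne]⟩
    have a2 : (D.G.deleteEdges {s(x, y)}).Adj w y := by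
      rw [SimpleGraph.deleteEdges_adj]
      exact ⟨hy.2, by simp [hx.2.ne, hy.2.ne]⟩
    exact a1.reachable.trans a2.reachable
  have hlx := hx.1.symm
  have hly := hy.1.symm
  have hdeg : ∀ v, (suppG D.G (D.leaf a) w x y hxy).degree v = D.G.degree v.1 := by
    intro v
    have := supp_degree hxy hl hw hlx hly hnxy v
    convert this
  have hlf : ∀ b ∈ E.erase a, D.leaf b ≠ D.leaf a ∧ D.leaf b ≠ w := by
    intro b hb
    rw [Finset.mem_erase] at hb
    refine ⟨fun h => hb.1 (D.leaf_injOn hb.2 ha h), fun h => ?_⟩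
    have := D.leaf_degree b hb.2
    rw [h, hw3] at this
    omega
  let lf : α → {v : D.V // v ≠ D.leaf a ∧ v ≠ w} := fun b =>
    if h : D.leaf b ≠ D.leaf a ∧ D.leaf b ≠ w then ⟨D.leaf b, h⟩
      else ⟨x, hlx.symm, hx.2.ne.symm⟩
  have hlf' : ∀ b ∈ E.erase a, (lf b).1 = D.leaf b := by
    intro b hb
    simp only [lf, dif_pos (hlf b hb)]
  let D' : Decomp α (E.erase a) :=
    { V := {v : D.V // v ≠ D.leaf a ∧ v ≠ w}
      G := suppG D.G (D.leaf a) w x y hxy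
      decAdj := Classical.decRel _
      isTree := supp_isTree hxy hl hw hlx hly hnxy D.isTree
      subcubic := by
        intro v
        have := hdeg v
        have h := D.subcubic v.1
        convert h using 2 <;> convert this
      leaf := lf
      leaf_degree := by
        intro b hb
        have := hdeg (lf b)
        rw [hlf' b hb] at this
        have h := D.leaf_degree b (Finset.mem_of_mem_erase hb)
        rw [← this] at h
        convert h
      leaf_injOn := by
        intro b hb c hc h
        have h' := congrArg Subtype.val h
        rw [hlf' b hb, hlf' c hc] at h'
        exact D.leaf_injOn (Finset.mem_of_mem_erase hb) (Finset.mem_of_mem_erase hc) h'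
      leaf_surj := by
        intro v hv
        have h1 : D.G.degree v.1 = 1 := by
          rw [← hv]
          symm
          convert hdeg v
        obtain ⟨b, hb, hbv⟩ := D.leaf_surj v.1 h1
        have hb' : b ∈ E.erase a := by
          rw [Finset.mem_erase]
          refine ⟨?_, hb⟩
          rintro rfl
          exact v.2.1 hbv.symm
        exact ⟨b, hb', Subtype.ext ((hlf' b hb').trans hbv)⟩ }
  refine ⟨D', ?_⟩
  rintro U' ⟨hU', u, v, huv, hdisp⟩
  obtain ⟨u', v', hadj, h1, -⟩ := supp_lift hxy hl hw hlx hly hnxy u v huv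
  refine ⟨E.filter fun b => (D.G.deleteEdges {s(u', v')}).Reachable (D.leaf b) u',
    ⟨Finset.filter_subset _ _, u', v', hadj, ?_⟩, ?_⟩
  · intro b hb
    simp [hb]
  · ext b
    rw [Finset.mem_inter, Finset.mem_filter]
    constructor
    · intro hb
      have hbE := hU' hb
      refine ⟨⟨Finset.mem_of_mem_erase hbE, ?_⟩, hbE⟩
      have := (h1 (lf b)).1 ((hdisp b hbE).1 hb)
      rwa [hlf' b hbE] at this
    · rintro ⟨⟨_, h⟩, hbE⟩
      refine (hdisp b hbE).2 ((h1 (lf b)).2 ?_)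
      rwa [hlf' b hbE]

theorem decomp_restrict {α : Type} (E' F : Finset α) (hc : 2 ≤ E'.card) :
    ∀ D : Decomp α (E' ∪ F), ∃ D' : Decomp α E', ∀ U', D'.Displays U' →
      ∃ U, D.Displays U ∧ U' = U ∩ E' := by
  induction F using Finset.induction_on with
  | empty =>
    rw [Finset.union_empty]
    intro D
    exact ⟨D, fun U hU => ⟨U, hU, (Finset.inter_eq_left.2 hU.1).symm⟩⟩
  | insert a F haF ih =>
    by_cases ha : a ∈ E'
    · rw [Finset.union_insert, Finset.insert_eq_of_mem (Finset.mem_union_left _ ha)]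
      exact ih
    · intro D
      have he : (E' ∪ insert a F).erase a = E' ∪ F := by
        rw [Finset.union_insert, Finset.erase_insert]
        simp [ha, haF]
      have h2 : 2 ≤ ((E' ∪ insert a F).erase a).card := by
        rw [he]; exact hc.trans (Finset.card_le_card Finset.subset_union_left)
      have hr := decomp_remove D a (by simp) h2
      rw [he] at hr
      obtain ⟨D1, h1⟩ := hr
      obtain ⟨D2, h2⟩ := ih D1
      refine ⟨D2, fun U2 hU2 => ?_⟩
      obtain ⟨U1, hU1, rfl⟩ := h2 U2 hU2
      obtain ⟨U, hU, rfl⟩ := h1 U1 hU1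
      refine ⟨U, hU, ?_⟩
      rw [Finset.inter_assoc, Finset.inter_eq_right.2 Finset.subset_union_left]

/-- attach two new leaves to the vertex `l`. -/
def extG {V : Type} (G : SimpleGraph V) (l : V) : SimpleGraph (V ⊕ Bool) where
  Adj p q := match p, q with
    | .inl u, .inl v => G.Adj u v
    | .inl u, .inr _ => u = l
    | .inr _, .inl v => v = l
    | .inr _, .inr _ => False
  symm := ⟨by
    rintro (u | u) (v | v) h
    · exact G.symm.1 _ _ h
    · exact h
    · exact h
    · exact h⟩
  loopless := ⟨by
    rintro (u | u) h
    · exact G.loopless.1 _ h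
    · exact h⟩

theorem ext_isTree {V : Type} {G : SimpleGraph V} (l : V) (hG : G.IsTree) :
    (extG G l).IsTree := by
  refine ⟨?_, ?_⟩
  · rw [SimpleGraph.connected_iff]
    refine ⟨?_, ⟨.inl l⟩⟩
    have key : ∀ p, (extG G l).Reachable p (.inl l) := by
      rintro (u | t)
      · refine reach_map (H := G) Sum.inl ?_ (hG.connected u l)
        intro u v huv
        exact SimpleGraph.Adj.reachable (show (extG G l).Adj (.inl u) (.inl v) from huv)
      · exact SimpleGraph.Adj.reachable (show (extG G l).Adj (.inr t) (.inl l) from rfl)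
    intro p q
    exact (key p).trans (key q).symm
  · rw [SimpleGraph.isAcyclic_iff_forall_adj_isBridge]
    have hpend : ∀ t : Bool, ¬ ((extG G l).deleteEdges {s(.inr t, .inl l)}).Reachable
        (.inr t) (.inl l) := by
      intro t hr
      have := reach_inv (fun p => p = Sum.inr t) ?_ hr rfl
      · simp at this
      · rintro u (v | v) huv rfl
        · rw [SimpleGraph.deleteEdges_adj] at huv
          have : v = l := huv.1
          subst this
          simp at huv
        · exact absurd (SimpleGraph.deleteEdges_adj.1 huv).1 (fun h => h)
    rintro (u | t) (v | s) huv
    · rw [SimpleGraph.isBridge_iff]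
      have huv' : G.Adj u v := huv
      have hb := (SimpleGraph.isAcyclic_iff_forall_adj_isBridge.1 hG.isAcyclic) huv'
      rw [SimpleGraph.isBridge_iff] at hb
      intro hr
      refine hb (reach_map (H' := G.deleteEdges {s(u, v)}) (Sum.elim id fun _ => l) ?_ hr)
      rintro (a | a) (b | b) hab
      · rw [SimpleGraph.deleteEdges_adj] at hab
        apply SimpleGraph.Adj.reachable
        rw [SimpleGraph.deleteEdges_adj]
        exact ⟨hab.1, by simpa using hab.2⟩
      · have : a = l := (SimpleGraph.deleteEdges_adj.1 hab).1
        subst this; exact SimpleGraph.Reachable.refl _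
      · have : b = l := (SimpleGraph.deleteEdges_adj.1 hab).1
        subst this; exact SimpleGraph.Reachable.refl _
      · exact SimpleGraph.Reachable.refl _
    · have : u = l := huv
      subst this
      rw [Sym2.eq_swap, SimpleGraph.isBridge_iff]
      exact hpend s
    · have : v = l := huv
      subst this
      rw [SimpleGraph.isBridge_iff]
      exact hpend t
    · exact absurd huv (fun h => h)

theorem ext_degree_inr {V : Type} [Fintype V] {G : SimpleGraph V} (l : V) (t : Bool) :
    (extG G l).degree (.inr t) = 1 := by
  rw [SimpleGraph.degree_eq_one_iff_existsUnique_adj]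
  refine ⟨.inl l, rfl, ?_⟩
  rintro (v | v) h
  · exact congrArg _ h
  · exact absurd h (fun h => h)

theorem ext_degree_ne {V : Type} [Fintype V] {G : SimpleGraph V} (l v : V) (hv : v ≠ l) :
    (extG G l).degree (.inl v) = G.degree v := by
  rw [← SimpleGraph.card_neighborFinset_eq_degree, ← SimpleGraph.card_neighborFinset_eq_degree,
    ← Finset.card_map (⟨Sum.inl, Sum.inl_injective⟩ : V ↪ V ⊕ Bool)]
  congr 1
  ext p
  rcases p with u | t
  · have : (extG G l).Adj (.inl v) (.inl u) ↔ G.Adj v u := Iff.rfl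
    simp [this]
  · have : (extG G l).Adj (.inl v) (.inr t) ↔ v = l := Iff.rfl
    simp [this, hv]

theorem ext_degree_self {V : Type} [Fintype V] {G : SimpleGraph V} (l : V) :
    (extG G l).degree (.inl l) = G.degree l + 2 := by
  rw [← SimpleGraph.card_neighborFinset_eq_degree, ← SimpleGraph.card_neighborFinset_eq_degree]
  have : (extG G l).neighborFinset (.inl l) = (G.neighborFinset l).disjSum Finset.univ := by
    ext p
    rcases p with u | t
    · have : (extG G l).Adj (.inl l) (.inl u) ↔ G.Adj l u := Iff.rfl
      simp [this]
    · have : (extG G l).Adj (.inl l) (.inr t) ↔ l = l := Iff.rfl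
      simp [this]
  rw [this, Finset.card_disjSum]
  simp

theorem decomp_extend {α : Type} {E : Finset α} (D : Decomp α E) (a : α) (ha : a ∉ E) :
    Nonempty (Decomp α (insert a E)) := by
  have hc := decomp_card D
  obtain ⟨b, hb⟩ : E.Nonempty := Finset.card_pos.1 (by omega)
  have hab : a ≠ b := fun h => ha (h ▸ hb)
  have hdl := D.leaf_degree b hb
  have hself : (extG D.G (D.leaf b)).degree (.inl (D.leaf b)) = 3 := by
    rw [ext_degree_self]
    have : D.G.degree (D.leaf b) + 2 = 3 := by rw [hdl]
    convert this
  have hne : ∀ v, v ≠ D.leaf b → (extG D.G (D.leaf b)).degree (.inl v) = D.G.degree v := by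
    intro v hv
    have := ext_degree_ne (G := D.G) _ _ hv
    convert this
  let lf : α → D.V ⊕ Bool := fun c =>
    if c = a then .inr false else if c = b then .inr true else .inl (D.leaf c)
  have hlf : ∀ c ∈ insert a E, (c = a ∧ lf c = .inr false) ∨ (c = b ∧ lf c = .inr true) ∨
      (c ∈ E ∧ c ≠ b ∧ D.leaf c ≠ D.leaf b ∧ lf c = .inl (D.leaf c)) := by
    intro c hc
    by_cases h1 : c = a
    · left; simp [lf, h1]
    · by_cases h2 : c = b
      · right; left; simp [lf, h2, hab.symm]
      · have hcE := Finset.mem_of_mem_insert_of_ne hc h1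
        right; right
        refine ⟨hcE, h2, fun h => h2 (D.leaf_injOn hcE hb h), ?_⟩
        simp [lf, h1, h2]
  refine ⟨{
    V := D.V ⊕ Bool
    G := extG D.G (D.leaf b)
    decAdj := Classical.decRel _
    isTree := ext_isTree _ D.isTree
    subcubic := ?_
    leaf := lf
    leaf_degree := ?_
    leaf_injOn := ?_
    leaf_surj := ?_ }⟩
  · rintro (v | t)
    · by_cases hv : v = D.leaf b
      · subst hv
        right; convert hself
      · have h1 := hne v hv
        have h2 := D.subcubic v
        rw [← h1] at h2
        convert h2
    · left; convert ext_degree_inr (G := D.G) (D.leaf b) t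
  · intro c hc
    rcases hlf c hc with ⟨_, h⟩ | ⟨_, h⟩ | ⟨hcE, _, h', h⟩
    · rw [h]; convert ext_degree_inr (G := D.G) (D.leaf b) _
    · rw [h]; convert ext_degree_inr (G := D.G) (D.leaf b) _
    · rw [h]
      have := (hne _ h').trans (D.leaf_degree c hcE)
      convert this
  · intro c hc d hd hcd
    have hinj : c ∈ E → d ∈ E → D.leaf c = D.leaf d → c = d :=
      fun h1 h2 h => D.leaf_injOn h1 h2 h
    have h1 := hlf c hc
    have h2 := hlf d hd
    rw [hcd] at h1
    grind
  · rintro (v | t) hv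
    · have hvl : v ≠ D.leaf b := by
        rintro rfl
        have : (3 : ℕ) = 1 := by
          rw [← hself, ← hv]
        omega
      have h1 : D.G.degree v = 1 := by
        rw [← hne v hvl, ← hv]
      obtain ⟨c, hc, rfl⟩ := D.leaf_surj v h1
      refine ⟨c, Finset.mem_insert_of_mem hc, ?_⟩
      have hca : c ≠ a := fun h => ha (h ▸ hc)
      have hcb : c ≠ b := fun h => hvl (h ▸ rfl)
      simp [lf, hca, hcb]
    · cases t
      · exact ⟨a, by simp, by simp [lf]⟩
      · exact ⟨b, by simp [hb], by simp [lf, hab.symm]⟩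

theorem decomp_extends {α : Type} {E : Finset α} (D : Decomp α E) (F : Finset α) :
    Nonempty (Decomp α (E ∪ F)) := by
  induction F using Finset.induction_on with
  | empty => rw [Finset.union_empty]; exact ⟨D⟩
  | insert a F haF ih =>
    rw [Finset.union_insert]
    by_cases ha : a ∈ E ∪ F
    · rw [Finset.insert_eq_of_mem ha]; exact ih
    · obtain ⟨D1⟩ := ih
      exact decomp_extend D1 a ha

theorem numClasses_minor {α : Type} (S T : SetSystem α) (B : Finset α) (hBS : B ⊆ S.E)
    (hTS : T.E ⊆ S.E) (hBT : Disjoint B T.E)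
    (hind : ∀ X ⊆ T.E, X ∈ T.Ind ↔ X ∪ B ∈ S.Ind) (U : Finset α) :
    T.numClasses (U ∩ T.E) ≤ S.numClasses U := by
  unfold SetSystem.numClasses
  have : Finite {X : Finset α // X ⊆ U} :=
    Finite.of_injective (fun X => (⟨X.1, Finset.mem_powerset.2 X.2⟩ : {X // X ∈ U.powerset}))
      (fun X Y h => Subtype.ext (congrArg (fun z => z.1) h))
  have : Finite (Quotient (S.eqvSetoid U)) := Quotient.finite _
  -- a choice of representatives
  let f : Quotient (T.eqvSetoid (U ∩ T.E)) → Quotient (S.eqvSetoid U) := fun q =>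
    Quotient.mk _ ⟨q.out.1 ∪ (B ∩ U), Finset.union_subset
      (q.out.2.trans Finset.inter_subset_left) Finset.inter_subset_right⟩
  refine Nat.card_le_card_of_injective f ?_
  intro p q hpq
  have h : S.Eqv U (p.out.1 ∪ (B ∩ U)) (q.out.1 ∪ (B ∩ U)) := Quotient.exact hpq
  rw [← Quotient.out_eq p, ← Quotient.out_eq q]
  apply Quotient.sound
  intro Z hZ
  have hZT : Z ⊆ T.E := hZ.trans Finset.sdiff_subset
  have hp : p.out.1 ⊆ T.E := p.out.2.trans Finset.inter_subset_right
  have hq : q.out.1 ⊆ T.E := q.out.2.trans Finset.inter_subset_right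
  rw [hind _ (Finset.union_subset hp hZT), hind _ (Finset.union_subset hq hZT)]
  have := h (Z ∪ (B \ U)) ?_
  · have e : ∀ X : Finset α, X ∪ (B ∩ U) ∪ (Z ∪ (B \ U)) = X ∪ Z ∪ B := by
      intro X; ext z; simp only [Finset.mem_union, Finset.mem_inter, Finset.mem_sdiff]; tauto
    rwa [e, e] at this
  · intro z hz
    rw [Finset.mem_union] at hz
    rw [Finset.mem_sdiff]
    rcases hz with hz | hz
    · have := hZ hz
      rw [Finset.mem_sdiff, Finset.mem_inter] at this
      exact ⟨hTS this.1, fun h => this.2 ⟨h, this.1⟩⟩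
    · rw [Finset.mem_sdiff] at hz
      exact ⟨hBS hz.1, hz.2⟩

theorem dw_minor {α : Type} (S T : SetSystem α) (B : Finset α) (hBS : B ⊆ S.E)
    (hTS : T.E ⊆ S.E) (hBT : Disjoint B T.E)
    (hind : ∀ X ⊆ T.E, X ∈ T.Ind ↔ X ∪ B ∈ S.Ind) : T.dw ≤ S.dw := by
  by_cases hD : Nonempty (Decomp α T.E)
  · obtain ⟨DT⟩ := hD
    have hun : T.E ∪ S.E = S.E := Finset.union_eq_right.2 hTS
    have hS := decomp_extends DT S.E
    rw [hun] at hS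
    obtain ⟨DS⟩ := hS
    have hne : {k : ℕ | ∃ D : Decomp α S.E, ∀ U, D.Displays U → S.numClasses U ≤ k}.Nonempty := by
      refine ⟨S.E.powerset.sup S.numClasses, DS, fun U hU => ?_⟩
      exact Finset.le_sup (f := S.numClasses) (Finset.mem_powerset.2 hU.1)
    obtain ⟨D, hD⟩ := Nat.sInf_mem hne
    have hr := decomp_restrict T.E S.E (decomp_card DT)
    rw [hun] at hr
    obtain ⟨D', hD'⟩ := hr D
    refine Nat.sInf_le ⟨D', fun U' hU' => ?_⟩
    obtain ⟨U, hU, rfl⟩ := hD' U' hU'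
    exact (numClasses_minor S T B hBS hTS hBT hind U).trans (hD U hU)
  · have : {k : ℕ | ∃ D : Decomp α T.E, ∀ U, D.Displays U → T.numClasses U ≤ k} = ∅ := by
      ext k
      simp only [Set.mem_ofPred_eq, Set.mem_empty_iff_false, iff_false]
      rintro ⟨D, -⟩
      exact hD ⟨D⟩
    unfold SetSystem.dw
    rw [this, Nat.sInf_empty]
    exact Nat.zero_le _

/-- for every positive integer `k`, the class of finite matroids of
decomposition-width at most `k` is minor-closed. -/
theorem statement_4 {α : Type} [Fintype α] (k : ℕ) (hk : 0 < k)
    (M N : Matroid α) (hNM : N.IsMinorOf M) (hM : M.dw ≤ k) :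
    N.dw ≤ k := by
  refine le_trans ?_ hM
  obtain ⟨C, D, hC, hD, hCD, rfl⟩ := hNM
  obtain ⟨I, hI⟩ := M.exists_isBasis C
  have hfin : I.Finite := Set.toFinite I
  have hcon : M.con C = M.contract C := rfl
  have hdel : (M.con C).del D = (M.contract C).delete D := rfl
  have hE : ((M.con C).del D).E = (M.E \ C) \ D := rfl
  refine dw_minor _ _ hfin.toFinset ?_ ?_ ?_ ?_
  · intro a ha
    exact (Set.Finite.mem_toFinset _).2 (hC (hI.subset (hfin.mem_toFinset.1 ha)))
  · intro a ha
    have ha' : a ∈ (M.E \ C) \ D := (Set.Finite.mem_toFinset _).1 ha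
    exact (Set.Finite.mem_toFinset _).2 ha'.1.1
  · rw [Finset.disjoint_left]
    intro a ha hb
    have hb' : a ∈ (M.E \ C) \ D := (Set.Finite.mem_toFinset _).1 hb
    exact hb'.1.2 (hI.subset (hfin.mem_toFinset.1 ha))
  · intro X hX
    have hX' : (X : Set α) ⊆ (M.E \ C) \ D := fun a ha => (Set.Finite.mem_toFinset _).1 (hX ha)
    change ((M.con C).del D).Indep ↑X ↔ M.Indep ↑(X ∪ hfin.toFinset)
    rw [hdel, Matroid.delete_indep_iff, hI.contract_indep_iff, Finset.coe_union,
      Set.Finite.coe_toFinset]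
    have h1 : Disjoint C (X : Set α) := Set.disjoint_left.2 fun a ha hx => (hX' hx).1.2 ha
    have h2 : Disjoint (X : Set α) D := Set.disjoint_left.2 fun a hx ha => (hX' hx).2 ha
    simp [h1, h2]
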